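/- Let α, β, γ be intuitionistic fuzzy values with α ⊂ β ⊂ γ in Atanassov's order. Then JS(α, β) ≤ JS(α, γ) and JS(β, γ) ≤ JS(α, γ). -/

import Mathlib

/-- `L p q = p·log₂(2p/(p+q)) + q·log₂(2q/(p+q))`, with Lean's conventions
`0 * log₂ _ = 0` and `x / 0 = 0`, `log₂ 0 = 0` implementing `0·log 0 = 0`
and `0·log(0/0) = 0`. -/
noncomputable def L (p q : ℝ) : ℝ :=
  p * Real.logb 2 (2 * p / (p + q)) + q * Real.logb 2 (2 * q / (p + q))

/-- An intuitionistic fuzzy value: a pair `⟨μ, ν⟩` with `0 ≤ μ`, `0 ≤ ν`,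
`μ + ν ≤ 1` (hence also `μ ≤ 1` and `ν ≤ 1`). -/
@[ext]
structure IFV where
  mu : ℝ
  nu : ℝ
  mu_nonneg : 0 ≤ mu
  nu_nonneg : 0 ≤ nu
  sum_le : mu + nu ≤ 1

/-- `Z(α,β) = L(1−μ_α, 1−μ_β) + L(ν_α, ν_β)`. -/
noncomputable def Z (a b : IFV) : ℝ := L (1 - a.mu) (1 - b.mu) + L a.nu b.nu

/-- The normalized Jensen–Shannon IF divergence `JS(α,β) = √(Z(α,β)/2)`. -/
noncomputable def JS (a b : IFV) : ℝ := Real.sqrt (Z a b / 2)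

/-- Atanassov's order: `α ⊂ β` iff `μ_α ≤ μ_β` and `ν_α ≥ ν_β`. -/
def IFV.sub (a b : IFV) : Prop := a.mu ≤ b.mu ∧ b.nu ≤ a.nu

/-- Strict Atanassov order: `α ⊊ β` iff `α ⊂ β` and `α ≠ β`. -/
def IFV.ssub (a b : IFV) : Prop := a.sub b ∧ a ≠ b

/-- The IFV `⟨1, 0⟩`. -/
def IFV.posOne : IFV := ⟨1, 0, by norm_num, le_rfl, by norm_num⟩

/-- The IFV `⟨0, 1⟩`. -/
def IFV.negOne : IFV := ⟨0, 1, le_rfl, by norm_num, by norm_num⟩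

/-!
Up to the factor `log 2`, `L p q` is the gap in the midpoint Jensen inequality for the convex
function `t ↦ t * log t`. For any convex function this gap grows with the interval: moving the right
endpoint of `[x, y]` to `z` moves the midpoint half as far, over an interval lying further to the
left, where the secant slope is no larger, so the endpoint gains at least twice what the midpoint
does; the left endpoint is symmetric. Atanassov's order makes both `1 - μ` and `ν` decrease along a
chain, so each of the two terms of `Z` only grows when a pair is enclosed in a longer chain.
-/

section MidpointGap

variable {𝕜 : Type*} [Field 𝕜]

/-- The gap in the midpoint Jensen inequality `2 * f ((x + y) / 2) ≤ f x + f y`; it generates the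
Jensen–Shannon divergence. It is not halved, to match the normalization of `L`. -/
def midpointGap (f : 𝕜 → 𝕜) (x y : 𝕜) : 𝕜 :=
  f x + f y - 2 * f ((x + y) / 2)

variable [LinearOrder 𝕜] [IsStrictOrderedRing 𝕜] {s : Set 𝕜} {f : 𝕜 → 𝕜}

theorem slope_le_slope_of_convexOn (hf : ConvexOn 𝕜 s f) {a b c d : 𝕜} (ha : a ∈ s) (hd : d ∈ s)
    (hab : a < b) (hcd : c < d) (hac : a ≤ c) (hbd : b ≤ d) : slope f a b ≤ slope f c d := by
  have hb : b ∈ s := hf.1.ordConnected.out ha hd ⟨hab.le, hbd⟩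
  have hc : c ∈ s := hf.1.ordConnected.out ha hd ⟨hac, hcd.le⟩
  have had : a < d := hab.trans_le hbd
  calc
    slope f a b ≤ slope f a d := hf.slope_mono ha ⟨hb, hab.ne'⟩ ⟨hd, had.ne'⟩ hbd
    _ = slope f d a := slope_comm f a d
    _ ≤ slope f d c := hf.slope_mono hd ⟨ha, had.ne⟩ ⟨hc, hcd.ne⟩ hac
    _ = slope f c d := slope_comm f d c

theorem midpointGap_le_midpointGap_right (hf : ConvexOn 𝕜 s f) {x y z : 𝕜} (hx : x ∈ s) (hz : z ∈ s)
    (hxy : x ≤ y) (hyz : y ≤ z) : midpointGap f x y ≤ midpointGap f x z := by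
  rcases hyz.eq_or_lt with rfl | hlt
  · rfl
  have hm : (x + y) / 2 ∈ s := hf.1.ordConnected.out hx hz ⟨by linarith, by linarith⟩
  have hslope : slope f ((x + y) / 2) ((x + z) / 2) ≤ slope f y z :=
    slope_le_slope_of_convexOn hf hm hz (by linarith) hlt (by linarith) (by linarith)
  have hincr : 2 * (f ((x + z) / 2) - f ((x + y) / 2)) ≤ f z - f y := calc
    _ = (z - y) * slope f ((x + y) / 2) ((x + z) / 2) := by
      rw [← vsub_eq_sub (f _), ← sub_smul_slope f, smul_eq_mul]
      ring
    _ ≤ (z - y) * slope f y z := mul_le_mul_of_nonneg_left hslope (sub_nonneg.2 hyz)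
    _ = f z - f y := sub_smul_slope f y z
  unfold midpointGap
  linarith

theorem midpointGap_le_midpointGap_left (hf : ConvexOn 𝕜 s f) {x y z : 𝕜} (hx : x ∈ s) (hz : z ∈ s)
    (hxy : x ≤ y) (hyz : y ≤ z) : midpointGap f y z ≤ midpointGap f x z := by
  rcases hxy.eq_or_lt with rfl | hlt
  · rfl
  have hm : (y + z) / 2 ∈ s := hf.1.ordConnected.out hx hz ⟨by linarith, by linarith⟩
  have hslope : slope f x y ≤ slope f ((x + z) / 2) ((y + z) / 2) :=
    slope_le_slope_of_convexOn hf hx hm hlt (by linarith) (by linarith) (by linarith)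
  have hincr : f y - f x ≤ 2 * (f ((y + z) / 2) - f ((x + z) / 2)) := calc
    _ = (y - x) * slope f x y := (sub_smul_slope f x y).symm
    _ ≤ (y - x) * slope f ((x + z) / 2) ((y + z) / 2) :=
      mul_le_mul_of_nonneg_left hslope (sub_nonneg.2 hxy)
    _ = 2 * (f ((y + z) / 2) - f ((x + z) / 2)) := by
      rw [← vsub_eq_sub (f _), ← sub_smul_slope f, smul_eq_mul]
      ring
  unfold midpointGap
  linarith

theorem midpointGap_le_midpointGap (hf : ConvexOn 𝕜 s f) {a b x y : 𝕜} (ha : a ∈ s) (hb : b ∈ s)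
    (hax : a ≤ x) (hxy : x ≤ y) (hyb : y ≤ b) : midpointGap f x y ≤ midpointGap f a b :=
  have hx : x ∈ s := hf.1.ordConnected.out ha hb ⟨hax, hxy.trans hyb⟩
  (midpointGap_le_midpointGap_right hf hx hb hxy hyb).trans
    (midpointGap_le_midpointGap_left hf ha hb hax (hxy.trans hyb))

end MidpointGap

theorem mul_logb_two_mul_div_add (r : ℝ) {p q : ℝ} (hp : 0 ≤ p) (hq : 0 ≤ q) :
    p * Real.logb r (2 * p / (p + q)) =
      (p * Real.log p - p * Real.log ((p + q) / 2)) / Real.log r := by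
  rcases hp.eq_or_lt with rfl | hpos
  · simp
  have hratio : 2 * p / (p + q) = p / ((p + q) / 2) := by field_simp
  rw [hratio, Real.logb, Real.log_div (by positivity) (by positivity)]
  ring

theorem L_comm (p q : ℝ) : L p q = L q p := by
  unfold L
  rw [add_comm p q, add_comm (p * _)]

theorem L_eq_midpointGap_div_log_two {p q : ℝ} (hp : 0 ≤ p) (hq : 0 ≤ q) :
    L p q = midpointGap (fun t ↦ t * Real.log t) p q / Real.log 2 := by
  rw [L, mul_logb_two_mul_div_add 2 hp hq, add_comm p q, mul_logb_two_mul_div_add 2 hq hp,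
    midpointGap, add_comm p q]
  ring

theorem L_le_L {a b x y : ℝ} (ha : 0 ≤ a) (hax : a ≤ x) (hxy : x ≤ y) (hyb : y ≤ b) :
    L x y ≤ L a b := by
  have hx : 0 ≤ x := ha.trans hax
  have hy : 0 ≤ y := hx.trans hxy
  have hb : 0 ≤ b := hy.trans hyb
  rw [L_eq_midpointGap_div_log_two hx hy, L_eq_midpointGap_div_log_two ha hb]
  exact div_le_div_of_nonneg_right
    (midpointGap_le_midpointGap Real.convexOn_mul_log ha hb hax hxy hyb)
    (Real.log_nonneg one_le_two)

theorem IFV.sub_refl (a : IFV) : a.sub a := ⟨le_rfl, le_rfl⟩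

theorem IFV.mu_le_one (a : IFV) : a.mu ≤ 1 := by
  linarith [a.nu_nonneg, a.sum_le]

theorem Z_le_Z_of_sub {a b c d : IFV} (hab : a.sub b) (hbc : b.sub c) (hcd : c.sub d) :
    Z b c ≤ Z a d := by
  have hmu : L (1 - b.mu) (1 - c.mu) ≤ L (1 - a.mu) (1 - d.mu) := by
    rw [L_comm (1 - b.mu), L_comm (1 - a.mu)]
    exact L_le_L (sub_nonneg.2 d.mu_le_one) (sub_le_sub_left hcd.1 1) (sub_le_sub_left hbc.1 1)
      (sub_le_sub_left hab.1 1)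
  have hnu : L b.nu c.nu ≤ L a.nu d.nu := by
    rw [L_comm b.nu, L_comm a.nu]
    exact L_le_L d.nu_nonneg hcd.2 hbc.2 hab.2
  exact add_le_add hmu hnu

theorem JS_le_JS_of_sub {a b c d : IFV} (hab : a.sub b) (hbc : b.sub c) (hcd : c.sub d) :
    JS b c ≤ JS a d :=
  Real.sqrt_le_sqrt (div_le_div_of_nonneg_right (Z_le_Z_of_sub hab hbc hcd) zero_le_two)

theorem JS_sub_chain_le (a b c : IFV) (h1 : a.sub b) (h2 : b.sub c) :
    JS a b ≤ JS a c ∧ JS b c ≤ JS a c :=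
  ⟨JS_le_JS_of_sub a.sub_refl h1 h2, JS_le_JS_of_sub h1 h2 c.sub_refl⟩
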